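/- arXiv:1301.0401 — 3 statements merged into one kernel-verified Lean document; each statement's English description precedes it below -/
import Mathlib

section
/- Let C > 0 and let (q_v, q_c) be a BIC two-priced mechanism with capacity C. Define r(v) = (1/C)·sup{ q_v(z) : 0 ≤ z ≤ v }, and q̄_c(v) = ∫_0^v r(y) dy for v ∈ [0, C] and q̄_c(v) = q_c(v) for v > C. Then q̄_c(v) ≤ q_c(v) for all v ≥ 0; consequently q_v(v) + q̄_c(v) ≤ q_v(v) + q_c(v) for all v, and the payment p̄(v) = v·(q_v(v) + q̄_c(v)) − C·q̄_c(v) satisfies p̄(v) ≥ p(v) = v·(q_v(v) + q_c(v)) − C·q_c(v) for all v ≥ 0. -/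
open Set

/-! A truthful agent of value `v ≤ C` has utility `C * qc v`, so incentive compatibility against the
report `z ≤ v` reads `(v - z) * qv z ≤ C * qc v - C * qc z`: from each `z`, the function `C * qc`
grows at rate at least `qv z`. Its growth from `0` then dominates the integral of the running
supremum of `qv`. Indeed, let `D` be this integral minus `C * qc`. For `y > 0`, a point `z < y` at
which `qv` nearly attains its supremum over `[0, y)` gives `D y - ε * y ≤ D z - ε * z`. Since `D` is
upper semicontinuous from the right, the infimum of the points `y` with `D v - ε * v ≤ D y - ε * y`
is again such a point, and the descent step forces it to be `0`. Letting `ε` tend to `0` gives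
`D v ≤ D 0 ≤ 0`. The payments compare because for `v ≤ C` the payment
`v * qv v - (C - v) * qc v` is antitone in `qc v`. -/

section Descent

open Filter Topology

lemma upperSemicontinuousWithinAt_of_le {α β : Type*} [TopologicalSpace α] [Preorder β]
    {D h : α → β} {s : Set α} {w : α} (hh : UpperSemicontinuousWithinAt h s w) (hw : h w ≤ D w)
    (hle : ∀ y ∈ s, D y ≤ h y) : UpperSemicontinuousWithinAt D s w := by
  intro c hc
  filter_upwards [hh c (hw.trans_lt hc), self_mem_nhdsWithin] with y hyc hy
  exact (hle y hy).trans_lt hyc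

lemma le_left_of_forall_exists_lt_le {α β : Type*} [ConditionallyCompleteLinearOrder α]
    [TopologicalSpace α] [OrderTopology α] [LinearOrder β] {D : α → β} {a b v : α}
    (hD : ∀ w ∈ Icc a b, UpperSemicontinuousWithinAt D (Icc w b) w)
    (hdescent : ∀ y ∈ Ioc a b, ∃ z ∈ Ico a y, D y ≤ D z) (hv : v ∈ Icc a b) : D v ≤ D a := by
  set S : Set α := {y ∈ Icc a b | D v ≤ D y}
  have hvS : v ∈ S := ⟨hv, le_rfl⟩
  obtain ⟨w, hglb⟩ : ∃ w, IsGLB S w := ⟨sInf S, isGLB_csInf ⟨v, hvS⟩ ⟨a, fun y hy => hy.1.1⟩⟩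
  have hw : w ∈ Icc a b := ⟨hglb.2 fun y hy => hy.1.1, (hglb.1 hvS).trans hv.2⟩
  have hvw : D v ≤ D w := (hD w hw).frequently (D v) <| frequently_nhdsWithin_iff.2 <|
    (hglb.frequently_nhds_mem ⟨v, hvS⟩).mono fun y hy => ⟨hy.2, hglb.1 hy, hy.1.2⟩
  obtain rfl | haw := hw.1.eq_or_lt
  · exact hvw
  · obtain ⟨z, hz, hwz⟩ := hdescent w ⟨haw, hw.2⟩
    exact absurd (hglb.1 ⟨⟨hz.1, hz.2.le.trans hw.2⟩, hvw.trans hwz⟩) hz.2.not_ge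

end Descent

section RunningSup

open Filter Topology intervalIntegral

/-- The running supremum `y ↦ sup {g z : a ≤ z ≤ y}`, with the junk value `0` when `y < a` or when
`g` is unbounded above on `[a, y]`. -/
noncomputable def runningSup (g : ℝ → ℝ) (a y : ℝ) : ℝ := sSup (g '' Icc a y)

variable {f g : ℝ → ℝ} {a b : ℝ}

lemma monotoneOn_runningSup (hg : BddAbove (g '' Icc a b)) :
    MonotoneOn (runningSup g a) (Icc a b) := fun _ hx _ hy hxy =>
  csSup_le_csSup (hg.mono (image_mono (Icc_subset_Icc_right hy.2)))
    ((nonempty_Icc.2 hx.1).image g) (image_mono (Icc_subset_Icc_right hxy))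

lemma intervalIntegrable_runningSup (hg : BddAbove (g '' Icc a b)) {x y : ℝ}
    (hx : x ∈ Icc a b) (hy : y ∈ Icc a b) :
    IntervalIntegrable (runningSup g a) MeasureTheory.volume x y :=
  ((monotoneOn_runningSup hg).mono (uIcc_subset_Icc hx hy)).intervalIntegrable

lemma exists_integral_runningSup_le (hg : BddAbove (g '' Icc a b)) {y ε : ℝ} (hy : y ∈ Ioc a b)
    (hε : 0 < ε) : ∃ z ∈ Ico a y, ∫ t in z..y, runningSup g a t ≤ (y - z) * (g z + ε) := by
  have hbdd : BddAbove (g '' Ico a y) :=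
    hg.mono (image_mono (Ico_subset_Icc_self.trans (Icc_subset_Icc_right hy.2)))
  obtain ⟨_, ⟨z, hz, rfl⟩, hgz⟩ :=
    exists_lt_of_lt_csSup ((nonempty_Ico.2 hy.1).image g) (sub_lt_self (sSup (g '' Ico a y)) hε)
  have hle : ∀ t ∈ Ioo z y, runningSup g a t ≤ g z + ε := fun t ht =>
    calc runningSup g a t ≤ sSup (g '' Ico a y) :=
          csSup_le_csSup hbdd ((nonempty_Icc.2 (hz.1.trans ht.1.le)).image g)
            (image_mono (Icc_subset_Ico_right ht.2))
      _ ≤ g z + ε := by linarith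
  refine ⟨z, hz, ?_⟩
  calc ∫ t in z..y, runningSup g a t ≤ ∫ _ in z..y, g z + ε :=
        integral_mono_on_of_le_Ioo hz.2.le
          (intervalIntegrable_runningSup hg ⟨hz.1, hz.2.le.trans hy.2⟩ ⟨hy.1.le, hy.2⟩)
          intervalIntegrable_const hle
    _ = (y - z) * (g z + ε) := by rw [integral_const, smul_eq_mul]

theorem integral_runningSup_le_sub (hg : BddAbove (g '' Icc a b))
    (hslope : ∀ z ∈ Icc a b, ∀ y ∈ Icc z b, (y - z) * g z ≤ f y - f z) {v : ℝ}
    (hv : v ∈ Icc a b) : ∫ y in a..v, runningSup g a y ≤ f v - f a := by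
  have hab : a ≤ b := hv.1.trans hv.2
  have hint {y : ℝ} (hy : y ∈ Icc a b) :=
    intervalIntegrable_runningSup hg (left_mem_Icc.2 hab) hy
  have hcont : ContinuousOn (fun y => ∫ t in a..y, runningSup g a t) (Icc a b) := by
    simpa only [uIcc_of_le hab] using
      continuousOn_primitive_interval' (hint (right_mem_Icc.2 hab)) left_mem_uIcc
  have happrox : ∀ ε > 0, ∫ y in a..v, runningSup g a y ≤ f v - f a + ε * (v - a) := by
    intro ε hε
    have hDle := le_left_of_forall_exists_lt_le (a := a) (b := b)
      (D := fun y => (∫ t in a..y, runningSup g a t) - ε * y - f y) ?_ ?_ hv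
    · rw [integral_same] at hDle
      linarith
    · intro w hw
      have hcw := (hcont w hw).mono (Icc_subset_Icc_left hw.1)
      have hmajorant : ContinuousWithinAt (fun y =>
          (∫ t in a..y, runningSup g a t) - ε * y - (f w + (y - w) * g w)) (Icc w b) w := by
        fun_prop
      exact upperSemicontinuousWithinAt_of_le hmajorant.upperSemicontinuousWithinAt
        (by simp) fun y hy => by linarith [hslope w hw y hy]
    · intro y hy
      obtain ⟨z, hz, hzy⟩ := exists_integral_runningSup_le hg hy hε
      have hzI : z ∈ Icc a b := ⟨hz.1, hz.2.le.trans hy.2⟩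
      have hsplit := integral_interval_sub_left (hint ⟨hy.1.le, hy.2⟩) (hint hzI)
      exact ⟨z, hz, by linarith [hslope z hzI y ⟨hz.2.le, hy.2⟩]⟩
  have hlim : Tendsto (fun ε => f v - f a + ε * (v - a)) (𝓝[>] 0) (𝓝 (f v - f a)) :=
    (Continuous.tendsto' (by fun_prop) 0 _ (by simp)).mono_left nhdsWithin_le_nhds
  exact ge_of_tendsto hlim (eventually_mem_nhdsWithin.mono happrox)

end RunningSup

section TwoPriced

/-- Expected utility of an agent of value `v` who reports `v'` to the two-priced mechanism
`(qv, qc)`: the capacity `C` caps the utility from being served. -/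
def twoPricedUtility (C : ℝ) (qv qc : ℝ → ℝ) (v v' : ℝ) : ℝ :=
  qv v' * min (v - v') C + qc v' * min (v - v' + C) C

variable {C : ℝ} {qv qc : ℝ → ℝ}

lemma twoPricedUtility_self (hC : 0 ≤ C) (v : ℝ) : twoPricedUtility C qv qc v v = C * qc v := by
  rw [twoPricedUtility, sub_self, zero_add, min_self, min_eq_left hC]
  ring

lemma twoPricedUtility_of_mem_Icc {v v' : ℝ} (hv : v ∈ Icc v' (v' + C)) :
    twoPricedUtility C qv qc v v' = (v - v') * qv v' + C * qc v' := by
  rw [twoPricedUtility, min_eq_left (by linarith [hv.2]), min_eq_right (by linarith [hv.1])]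
  ring

lemma integral_runningSup_le_mul (hC : 0 ≤ C) (hqv : BddAbove (qv '' Icc 0 C)) (hqc : 0 ≤ qc 0)
    (hIC : ∀ v ∈ Icc 0 C, ∀ v' ∈ Icc 0 v,
      twoPricedUtility C qv qc v v' ≤ twoPricedUtility C qv qc v v)
    {v : ℝ} (hv : v ∈ Icc 0 C) : ∫ y in (0 : ℝ)..v, runningSup qv 0 y ≤ C * qc v := by
  have hslope : ∀ z ∈ Icc 0 C, ∀ y ∈ Icc z C, (y - z) * qv z ≤ C * qc y - C * qc z := by
    intro z hz y hy
    have hyz := hIC y ⟨hz.1.trans hy.1, hy.2⟩ z ⟨hz.1, hy.1⟩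
    rw [twoPricedUtility_self hC,
      twoPricedUtility_of_mem_Icc ⟨hy.1, by linarith [hy.2, hz.1]⟩] at hyz
    linarith
  linarith [integral_runningSup_le_sub (f := fun y => C * qc y) hqv hslope hv, mul_nonneg hC hqc]

theorem qcbar_below_qc_and_payment_dominates_general (hC : 0 < C)
    (hqv : BddAbove (qv '' Icc 0 C)) (hqc : 0 ≤ qc 0)
    (hIC : ∀ v ∈ Icc 0 C, ∀ v' ∈ Icc 0 v,
      twoPricedUtility C qv qc v v' ≤ twoPricedUtility C qv qc v v)
    {r : ℝ → ℝ} (hr : ∀ v ∈ Icc 0 C, r v = (1 / C) * runningSup qv 0 v)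
    {qcbar : ℝ → ℝ} (hqcbar1 : ∀ v ∈ Icc 0 C, qcbar v = ∫ y in (0 : ℝ)..v, r y)
    (hqcbar2 : ∀ v, C < v → qcbar v = qc v) :
    (∀ v, 0 ≤ v → qcbar v ≤ qc v) ∧
      (∀ v, 0 ≤ v → qv v + qcbar v ≤ qv v + qc v) ∧
        (∀ v, 0 ≤ v →
          v * (qv v + qcbar v) - C * qcbar v ≥ v * (qv v + qc v) - C * qc v) := by
  have hle : ∀ v, 0 ≤ v → qcbar v ≤ qc v := by
    intro v hv
    obtain hvC | hCv := le_or_gt v C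
    · have hrint : ∫ y in (0 : ℝ)..v, r y = (1 / C) * ∫ y in (0 : ℝ)..v, runningSup qv 0 y := by
        rw [← intervalIntegral.integral_const_mul]
        refine intervalIntegral.integral_congr fun y hy => ?_
        rw [uIcc_of_le hv] at hy
        exact hr y ⟨hy.1, hy.2.trans hvC⟩
      rw [hqcbar1 v ⟨hv, hvC⟩, hrint, one_div_mul_eq_div, div_le_iff₀' hC]
      exact integral_runningSup_le_mul hC.le hqv hqc hIC ⟨hv, hvC⟩
    · exact (hqcbar2 v hCv).le
  refine ⟨hle, fun v hv => by gcongr; exact hle v hv, fun v hv => ?_⟩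
  obtain hvC | hCv := le_or_gt v C
  · linarith [mul_le_mul_of_nonneg_left (hle v hv) (sub_nonneg.2 hvC)]
  · rw [hqcbar2 v hCv]

end TwoPriced

/-- For a BIC two-priced mechanism `(q_v, q_c)` with capacity `C > 0`, the
convexified rule `q̄_c` (equal to `∫_0^v r` on `[0,C]` with
`r(v) = (1/C)·sup_{0 ≤ z ≤ v} q_v(z)`, and equal to `q_c` above `C`) satisfies
`q̄_c ≤ q_c` pointwise, hence `q_v + q̄_c ≤ q_v + q_c` and the corresponding payment
`p̄(v) = v·(q_v(v) + q̄_c(v)) − C·q̄_c(v)` dominates `p(v) = v·(q_v(v)+q_c(v)) − C·q_c(v)`. -/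
theorem qcbar_below_qc_and_payment_dominates
    (C : ℝ) (hC : 0 < C)
    (qv qc : ℝ → ℝ)
    (hqv : ∀ v, 0 ≤ v → qv v ∈ Icc (0 : ℝ) 1)
    (hqc : ∀ v, 0 ≤ v → qc v ∈ Icc (0 : ℝ) 1)
    (hsum : ∀ v, 0 ≤ v → qv v + qc v ≤ 1)
    (hBIC : ∀ v, 0 ≤ v → ∀ v', 0 ≤ v' →
        qv v * min (v - v) C + qc v * min (v - v + C) C ≥
          qv v' * min (v - v') C + qc v' * min (v - v' + C) C)
    (r : ℝ → ℝ) (hr : ∀ v, 0 ≤ v → r v = (1 / C) * sSup (qv '' Icc 0 v))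
    (qcbar : ℝ → ℝ)
    (hqcbar1 : ∀ v ∈ Icc (0 : ℝ) C, qcbar v = ∫ y in (0 : ℝ)..v, r y)
    (hqcbar2 : ∀ v, C < v → qcbar v = qc v) :
    (∀ v, 0 ≤ v → qcbar v ≤ qc v) ∧
      (∀ v, 0 ≤ v → qv v + qcbar v ≤ qv v + qc v) ∧
        (∀ v, 0 ≤ v →
          v * (qv v + qcbar v) - C * qcbar v ≥ v * (qv v + qc v) - C * qc v) :=
  qcbar_below_qc_and_payment_dominates_general hC
    ⟨1, forall_mem_image.2 fun v hv => (hqv v hv.1).2⟩ (hqc 0 le_rfl).1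
    (fun v hv v' hv' => hBIC v hv.1 v' hv'.1) (fun v hv => hr v hv.1) hqcbar1 hqcbar2
end

section
/- Let V be drawn from a distribution on [0,∞) with CDF F, density f > 0, and finite mean, and let C > 0. Let g : [0,∞) → [0,1] be nondecreasing with g(0) = 0 and convex on [0, C], and let q_c : [0,∞) → [0,1] be measurable with g(v) ≤ q_c(v) for all v ≥ 0. Then E[ ∫_0^{min(V, C)} g(z) dz ] ≤ E[ φ⁺(V)·q_c(V) ], where φ(v) = v − (1 − F(v))/f(v) and φ⁺(v) = max(φ(v), 0). -/
open MeasureTheory Set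

/-! Myerson's argument. Allocate with probability `h v = g (min v C)` and charge the
incentive-compatible payment `v * h v - ∫ z in 0..v, h z`. For `w ≤ C` the integral of `g` over
`[0, w]` is at most half of `w * g w`, by convexity, so the payment at `v` is at least the integral
of `g` up to `min v C`. The layer-cake formula turns the expected payment into the expectation of
`φ(V) * h(V)`, and this is at most the expectation of `φ⁺(V) * qc(V)` because `0 ≤ h ≤ qc`. -/

section Payment

variable {g h : ℝ → ℝ} {v w C : ℝ}

lemma monotoneOn_div_of_convexOn (hg : ConvexOn ℝ (Icc 0 C) g)
    (hg0 : g 0 = 0) : MonotoneOn (fun z => g z / z) (Ioc 0 C) := fun z hz w hw hzw => by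
  simpa [hg0] using hg.secant_mono (left_mem_Icc.2 (hz.1.le.trans hz.2)) (Ioc_subset_Icc_self hz)
    (Ioc_subset_Icc_self hw) hz.1.ne' hw.1.ne' hzw

lemma two_mul_integral_le_of_monotoneOn_div (hw : 0 ≤ w)
    (hg : MonotoneOn (fun z => g z / z) (Ioc 0 w)) (hgi : IntervalIntegrable g volume 0 w) :
    2 * ∫ z in (0 : ℝ)..w, g z ≤ w * g w := by
  rcases hw.eq_or_lt with rfl | hw0
  · simp
  have hchord : ∫ z in (0 : ℝ)..w, g z ≤ ∫ z in (0 : ℝ)..w, z * (g w / w) := by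
    refine intervalIntegral.integral_mono_on_of_le_Ioo hw hgi
      (Continuous.intervalIntegrable (by fun_prop) 0 w) fun z hz => ?_
    have hslope : g z / z ≤ g w / w := hg ⟨hz.1, hz.2.le⟩ ⟨hw0, le_rfl⟩ hz.2.le
    rwa [div_le_iff₀' hz.1] at hslope
  have htriangle : ∫ z in (0 : ℝ)..w, z * (g w / w) = w * g w / 2 := by
    rw [intervalIntegral.integral_mul_const, integral_id]
    field_simp
    ring
  linarith

lemma integral_comp_min_const (hC : 0 ≤ C) (hg : IntervalIntegrable g volume 0 C) :
    ∫ z in (0 : ℝ)..v, g (min z C) =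
      (∫ z in (0 : ℝ)..(min v C), g z) + (v - min v C) * g C := by
  have hbelow {w : ℝ} (hw : w ≤ C) : EqOn (fun z => g (min z C)) g (uIcc 0 w) := fun z hz =>
    congrArg g (min_eq_left (hz.2.trans (max_le hC hw)))
  rcases le_total v C with hvC | hCv
  · rw [min_eq_left hvC, sub_self, zero_mul, add_zero,
      intervalIntegral.integral_congr (hbelow hvC)]
  · have habove : EqOn (fun z => g (min z C)) (fun _ => g C) (uIcc C v) := fun z hz =>
      congrArg g (min_eq_right (by rw [uIcc_of_le hCv] at hz; exact hz.1))
    rw [min_eq_right hCv, ← intervalIntegral.integral_add_adjacent_intervals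
      (hg.congr fun z hz => (hbelow le_rfl (uIoc_subset_uIcc hz)).symm)
      (intervalIntegrable_const.congr fun z hz => (habove (uIoc_subset_uIcc hz)).symm),
      intervalIntegral.integral_congr (hbelow le_rfl), intervalIntegral.integral_congr habove,
      intervalIntegral.integral_const, smul_eq_mul]

lemma integral_le_payment (hC : 0 ≤ C) (hv : 0 ≤ v) (hg : MonotoneOn g (Icc 0 C))
    (hgdiv : MonotoneOn (fun z => g z / z) (Ioc 0 C)) :
    ∫ z in (0 : ℝ)..(min v C), g z ≤ v * g (min v C) - ∫ z in (0 : ℝ)..v, g (min z C) := by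
  have hw : 0 ≤ min v C := le_min hv hC
  have hwC : min v C ≤ C := min_le_right v C
  have hgi : IntervalIntegrable g volume 0 C := by
    rw [← uIcc_of_le hC] at hg
    exact hg.intervalIntegrable
  have hgi_min : IntervalIntegrable g volume 0 (min v C) :=
    hgi.mono_set (uIcc_subset_uIcc_left (by rw [uIcc_of_le hC]; exact ⟨hw, hwC⟩))
  have hhalf : 2 * ∫ z in (0 : ℝ)..(min v C), g z ≤ min v C * g (min v C) :=
    two_mul_integral_le_of_monotoneOn_div hw (hgdiv.mono (Ioc_subset_Ioc_right hwC)) hgi_min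
  have hcap : (v - min v C) * g (min v C) = (v - min v C) * g C := by
    rcases le_total v C with hvC | hCv
    · simp [hvC]
    · rw [min_eq_right hCv]
  rw [integral_comp_min_const hC hgi]
  linarith

lemma locallyIntegrableOn_of_monotoneOn {s : Set ℝ} (hs : IsLocallyClosed s)
    (hh : MonotoneOn h s) : LocallyIntegrableOn h s :=
  (locallyIntegrableOn_iff hs).2 fun _ hks hk => (hh.mono hks).integrableOn_isCompact hk

end Payment

section LayerCake

variable {Ω : Type*} [MeasurableSpace Ω] {μ : Measure Ω} [IsFiniteMeasure μ]
  {X : Ω → ℝ} {h : ℝ → ℝ}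

lemma lintegral_primitive_comp_eq (hX : AEMeasurable X μ) (hX0 : 0 ≤ᵐ[μ] X)
    (hh : LocallyIntegrableOn h (Ici 0)) (hh0 : ∀ t, 0 ≤ t → 0 ≤ h t) :
    ∫⁻ ω, ENNReal.ofReal (∫ t in (0 : ℝ)..X ω, h t) ∂μ =
      ∫⁻ t in Ioi (0 : ℝ), ENNReal.ofReal (μ.real {ω | t < X ω} * h t) := by
  have hhi (t : ℝ) (ht : 0 < t) : IntervalIntegrable h volume 0 t :=
    (intervalIntegrable_iff_integrableOn_Icc_of_le ht.le).2
      (hh.integrableOn_compact_subset Icc_subset_Ici_self isCompact_Icc)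
  rw [lintegral_comp_eq_lintegral_meas_lt_mul μ hX0 hX hhi
    (ae_restrict_of_forall_mem measurableSet_Ioi fun t ht => hh0 t (le_of_lt ht))]
  simp only [ENNReal.ofReal_mul measureReal_nonneg, ofReal_measureReal (measure_ne_top μ _)]

lemma integrableOn_measureReal_lt_mul (hX : AEMeasurable X μ) (hX0 : 0 ≤ᵐ[μ] X)
    (hh : LocallyIntegrableOn h (Ici 0)) (hh0 : ∀ t, 0 ≤ t → 0 ≤ h t)
    (hH : Integrable (fun ω => ∫ t in (0 : ℝ)..X ω, h t) μ) :
    IntegrableOn (fun t => μ.real {ω | t < X ω} * h t) (Ioi 0) := by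
  have htail : Antitone fun t => μ.real {ω | t < X ω} := fun s t hst =>
    measureReal_mono fun ω (hω : t < X ω) => hst.trans_lt hω
  refine ⟨htail.measurable.aestronglyMeasurable.mul
    (hh.mono_set Ioi_subset_Ici_self).aestronglyMeasurable, ?_⟩
  rw [hasFiniteIntegral_iff_ofReal (ae_restrict_of_forall_mem measurableSet_Ioi
    fun t ht => mul_nonneg measureReal_nonneg (hh0 t (le_of_lt ht))),
    ← lintegral_primitive_comp_eq hX hX0 hh hh0]
  exact hH.lintegral_lt_top

lemma integral_primitive_comp_eq (hX : AEMeasurable X μ) (hX0 : 0 ≤ᵐ[μ] X)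
    (hh : LocallyIntegrableOn h (Ici 0)) (hh0 : ∀ t, 0 ≤ t → 0 ≤ h t)
    (hH : Integrable (fun ω => ∫ t in (0 : ℝ)..X ω, h t) μ) :
    ∫ ω, (∫ t in (0 : ℝ)..X ω, h t) ∂μ = ∫ t in Ioi (0 : ℝ), μ.real {ω | t < X ω} * h t := by
  rw [integral_eq_lintegral_of_nonneg_ae ?_ hH.aestronglyMeasurable,
    integral_eq_lintegral_of_nonneg_ae ?_
      (integrableOn_measureReal_lt_mul hX hX0 hh hh0 hH).aestronglyMeasurable,
    lintegral_primitive_comp_eq hX hX0 hh hh0]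
  · exact ae_restrict_of_forall_mem measurableSet_Ioi
      fun t ht => mul_nonneg measureReal_nonneg (hh0 t (le_of_lt ht))
  · filter_upwards [hX0] with ω hω
    exact intervalIntegral.integral_nonneg hω fun t ht => hh0 t ht.1

end LayerCake

section Density

variable {f F u : ℝ → ℝ}

/-- The law on `[0, ∞)` with Lebesgue density `f`, so that the layer-cake formula can be applied to
integrals against `f`. Values of `f` at negative arguments, or negative values of `f`, are
ignored. -/
noncomputable def densityLaw (f : ℝ → ℝ) : Measure ℝ :=
  (volume.restrict (Ici 0)).withDensity fun v => ENNReal.ofReal (f v)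

lemma ae_nonneg_densityLaw : ∀ᵐ v ∂densityLaw f, 0 ≤ v :=
  (withDensity_absolutelyContinuous _ _).ae_le (ae_restrict_mem measurableSet_Ici)

lemma toReal_ofReal_smul_ae_eq_mul (hf0 : ∀ v, 0 ≤ v → 0 ≤ f v) :
    (fun v => (ENNReal.ofReal (f v)).toReal • u v) =ᵐ[volume.restrict (Ici 0)]
      fun v => u v * f v :=
  ae_restrict_of_forall_mem measurableSet_Ici fun v hv => by
    simp only [ENNReal.toReal_ofReal (hf0 v hv), smul_eq_mul, mul_comm]

lemma integrable_densityLaw_iff (hf : AEMeasurable f (volume.restrict (Ici 0)))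
    (hf0 : ∀ v, 0 ≤ v → 0 ≤ f v) :
    Integrable u (densityLaw f) ↔ IntegrableOn (fun v => u v * f v) (Ici 0) := by
  rw [densityLaw, integrable_withDensity_iff_integrable_smul₀' hf.ennreal_ofReal (by simp),
    integrable_congr (toReal_ofReal_smul_ae_eq_mul hf0), IntegrableOn]

lemma integral_densityLaw (hf : AEMeasurable f (volume.restrict (Ici 0)))
    (hf0 : ∀ v, 0 ≤ v → 0 ≤ f v) :
    ∫ v, u v ∂densityLaw f = ∫ v in Ici 0, u v * f v := by
  rw [densityLaw, integral_withDensity_eq_integral_toReal_smul₀ hf.ennreal_ofReal (by simp),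
    integral_congr_ae (toReal_ofReal_smul_ae_eq_mul hf0)]

lemma measureReal_densityLaw_Ioi (hfi : IntegrableOn f (Ici 0)) (hf0 : ∀ v, 0 ≤ v → 0 ≤ f v)
    {v : ℝ} (hv : 0 ≤ v) : (densityLaw f).real (Ioi v) = ∫ t in Ioi v, f t := by
  have hsub : Ioi v ⊆ Ici 0 := fun t ht => hv.trans (le_of_lt ht)
  rw [measureReal_def, densityLaw, withDensity_apply _ measurableSet_Ioi,
    Measure.restrict_restrict measurableSet_Ioi, inter_eq_self_of_subset_left hsub,
    ← integral_eq_lintegral_of_nonneg_ae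
      (ae_restrict_of_forall_mem measurableSet_Ioi fun t ht => hf0 t (hsub ht))
      (hfi.mono_set hsub).aestronglyMeasurable]

lemma one_sub_cdf_eq_measureReal_Ioi (hf0 : ∀ v, 0 ≤ v → 0 ≤ f v)
    (hprob : ∫ v in Ici (0 : ℝ), f v = 1) (hF : ∀ v, F v = ∫ t in (0 : ℝ)..v, f t)
    {v : ℝ} (hv : 0 ≤ v) : 1 - F v = (densityLaw f).real (Ioi v) := by
  have hfi : IntegrableOn f (Ici 0) := integrable_of_integral_eq_one hprob
  rw [measureReal_densityLaw_Ioi hfi hf0 hv, hF,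
    ← intervalIntegral.integral_Ioi_sub_Ioi (hfi.mono_set Ioi_subset_Ici_self) hv,
    ← integral_Ici_eq_integral_Ioi, hprob, sub_sub_cancel]

lemma cdf_le_one (hf0 : ∀ v, 0 ≤ v → 0 ≤ f v) (hprob : ∫ v in Ici (0 : ℝ), f v = 1)
    (hF : ∀ v, F v = ∫ t in (0 : ℝ)..v, f t) {v : ℝ} (hv : 0 ≤ v) : F v ≤ 1 := by
  rw [← sub_nonneg, one_sub_cdf_eq_measureReal_Ioi hf0 hprob hF hv]
  exact measureReal_nonneg

lemma aemeasurable_cdf (hf0 : ∀ v, 0 ≤ v → 0 ≤ f v) (hprob : ∫ v in Ici (0 : ℝ), f v = 1)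
    (hF : ∀ v, F v = ∫ t in (0 : ℝ)..v, f t) : AEMeasurable F (volume.restrict (Ici 0)) := by
  have hfi : IntegrableOn f (Ici 0) := integrable_of_integral_eq_one hprob
  have : IsFiniteMeasure (densityLaw f) := isFiniteMeasure_withDensity_ofReal hfi.2
  have htail : Antitone fun v => (densityLaw f).real (Ioi v) := fun v w hvw =>
    measureReal_mono (Ioi_subset_Ioi hvw)
  refine (htail.measurable.const_sub 1).aemeasurable.congr
    (ae_restrict_of_forall_mem measurableSet_Ici fun v hv => ?_)
  simp only [← one_sub_cdf_eq_measureReal_Ioi hf0 hprob hF hv, sub_sub_cancel]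

end Density

section Revenue

variable {f F h : ℝ → ℝ}

lemma integrableOn_mul_mul_density (hmean : IntegrableOn (fun v => v * f v) (Ici 0))
    (hh : AEStronglyMeasurable h (volume.restrict (Ici 0))) {c : ℝ}
    (hhc : ∀ v, 0 ≤ v → ‖h v‖ ≤ c) : IntegrableOn (fun v => v * h v * f v) (Ici 0) :=
  IntegrableOn.congr_fun (hmean.mul_bdd hh (ae_restrict_of_forall_mem measurableSet_Ici hhc))
    (fun v _ => mul_right_comm v (f v) (h v)) measurableSet_Ici

lemma integrable_primitive_of_monotoneOn {μ : Measure ℝ} (hμ : ∀ᵐ v ∂μ, 0 ≤ v)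
    (hh : MonotoneOn h (Ici 0)) (hh0 : ∀ v, 0 ≤ v → 0 ≤ h v)
    (hvh : Integrable (fun v => v * h v) μ) :
    Integrable (fun v => ∫ t in (0 : ℝ)..v, h t) μ := by
  have hhi (v : ℝ) (hv : 0 ≤ v) : IntervalIntegrable h volume 0 v :=
    (hh.mono (by rw [uIcc_of_le hv]; exact Icc_subset_Ici_self)).intervalIntegrable
  have hmono : MonotoneOn (fun v => ∫ t in (0 : ℝ)..v, h t) (Ici 0) := fun v hv w hw hvw =>
    intervalIntegral.integral_mono_interval le_rfl hv hvw
      (ae_restrict_of_forall_mem measurableSet_Ioc fun t ht => hh0 t ht.1.le) (hhi w hw)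
  have hmeas : AEMeasurable (fun v => ∫ t in (0 : ℝ)..v, h t) μ := by
    rw [← Measure.restrict_eq_self_of_ae_mem (s := Ici 0) hμ]
    exact aemeasurable_restrict_of_monotoneOn measurableSet_Ici hmono
  refine hvh.mono' hmeas.aestronglyMeasurable ?_
  filter_upwards [hμ] with v hv
  rw [Real.norm_of_nonneg (intervalIntegral.integral_nonneg hv fun t ht => hh0 t ht.1)]
  calc ∫ t in (0 : ℝ)..v, h t ≤ ∫ _ in (0 : ℝ)..v, h v :=
        intervalIntegral.integral_mono_on hv (hhi v hv) intervalIntegrable_const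
          fun t ht => hh ht.1 hv ht.2
    _ = v * h v := by simp

lemma integrableOn_primitive_mul_density (hf : AEMeasurable f (volume.restrict (Ici 0)))
    (hf0 : ∀ v, 0 ≤ v → 0 ≤ f v) (hh : MonotoneOn h (Ici 0)) (hh0 : ∀ v, 0 ≤ v → 0 ≤ h v)
    (hvh : IntegrableOn (fun v => v * h v * f v) (Ici 0)) :
    IntegrableOn (fun v => (∫ t in (0 : ℝ)..v, h t) * f v) (Ici 0) :=
  (integrable_densityLaw_iff hf hf0).1 <| integrable_primitive_of_monotoneOn
    ae_nonneg_densityLaw hh hh0 ((integrable_densityLaw_iff hf hf0).2 hvh)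

lemma integrableOn_tail_mul (hf0 : ∀ v, 0 ≤ v → 0 ≤ f v)
    (hprob : ∫ v in Ici (0 : ℝ), f v = 1) (hF : ∀ v, F v = ∫ t in (0 : ℝ)..v, f t)
    (hh : LocallyIntegrableOn h (Ici 0)) (hh0 : ∀ v, 0 ≤ v → 0 ≤ h v)
    (hH : IntegrableOn (fun v => (∫ t in (0 : ℝ)..v, h t) * f v) (Ici 0)) :
    IntegrableOn (fun v => (1 - F v) * h v) (Ici 0) := by
  have hfi : IntegrableOn f (Ici 0) := integrable_of_integral_eq_one hprob
  have : IsFiniteMeasure (densityLaw f) := isFiniteMeasure_withDensity_ofReal hfi.2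
  rw [integrableOn_Ici_iff_integrableOn_Ioi]
  refine (integrableOn_congr_fun (fun v (hv : 0 < v) => ?_) measurableSet_Ioi).1
    (integrableOn_measureReal_lt_mul aemeasurable_id ae_nonneg_densityLaw hh hh0
      ((integrable_densityLaw_iff hfi.aemeasurable hf0).2 hH))
  rw [one_sub_cdf_eq_measureReal_Ioi hf0 hprob hF hv.le]
  rfl

lemma integral_primitive_mul_density_eq (hf0 : ∀ v, 0 ≤ v → 0 ≤ f v)
    (hprob : ∫ v in Ici (0 : ℝ), f v = 1) (hF : ∀ v, F v = ∫ t in (0 : ℝ)..v, f t)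
    (hh : LocallyIntegrableOn h (Ici 0)) (hh0 : ∀ v, 0 ≤ v → 0 ≤ h v)
    (hH : IntegrableOn (fun v => (∫ t in (0 : ℝ)..v, h t) * f v) (Ici 0)) :
    ∫ v in Ici (0 : ℝ), (∫ t in (0 : ℝ)..v, h t) * f v = ∫ v in Ici (0 : ℝ), (1 - F v) * h v := by
  have hfi : IntegrableOn f (Ici 0) := integrable_of_integral_eq_one hprob
  have : IsFiniteMeasure (densityLaw f) := isFiniteMeasure_withDensity_ofReal hfi.2
  rw [← integral_densityLaw hfi.aemeasurable hf0, integral_Ici_eq_integral_Ioi]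
  refine (integral_primitive_comp_eq aemeasurable_id ae_nonneg_densityLaw hh hh0
    ((integrable_densityLaw_iff hfi.aemeasurable hf0).2 hH)).trans ?_
  refine setIntegral_congr_fun measurableSet_Ioi fun v (hv : 0 < v) => ?_
  rw [one_sub_cdf_eq_measureReal_Ioi hf0 hprob hF hv.le]
  rfl

lemma integrableOn_sub_tail_mul (hf0 : ∀ v, 0 ≤ v → 0 ≤ f v)
    (hprob : ∫ v in Ici (0 : ℝ), f v = 1) (hF : ∀ v, F v = ∫ t in (0 : ℝ)..v, f t)
    (hh : LocallyIntegrableOn h (Ici 0)) (hh0 : ∀ v, 0 ≤ v → 0 ≤ h v)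
    (hvh : IntegrableOn (fun v => v * h v * f v) (Ici 0))
    (hH : IntegrableOn (fun v => (∫ t in (0 : ℝ)..v, h t) * f v) (Ici 0)) :
    IntegrableOn (fun v => (v * f v - (1 - F v)) * h v) (Ici 0) :=
  (hvh.sub (integrableOn_tail_mul hf0 hprob hF hh hh0 hH)).congr_fun
    (fun v _ => by simp only [Pi.sub_apply]; ring) measurableSet_Ici

lemma integral_payment_mul_density_eq (hf0 : ∀ v, 0 ≤ v → 0 ≤ f v)
    (hprob : ∫ v in Ici (0 : ℝ), f v = 1) (hF : ∀ v, F v = ∫ t in (0 : ℝ)..v, f t)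
    (hh : LocallyIntegrableOn h (Ici 0)) (hh0 : ∀ v, 0 ≤ v → 0 ≤ h v)
    (hvh : IntegrableOn (fun v => v * h v * f v) (Ici 0))
    (hH : IntegrableOn (fun v => (∫ t in (0 : ℝ)..v, h t) * f v) (Ici 0)) :
    ∫ v in Ici (0 : ℝ), (v * h v - ∫ t in (0 : ℝ)..v, h t) * f v =
      ∫ v in Ici (0 : ℝ), (v * f v - (1 - F v)) * h v := by
  have htail := integrableOn_tail_mul hf0 hprob hF hh hh0 hH
  calc ∫ v in Ici (0 : ℝ), (v * h v - ∫ t in (0 : ℝ)..v, h t) * f v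
      = ∫ v in Ici (0 : ℝ), (v * h v * f v - (∫ t in (0 : ℝ)..v, h t) * f v) := by
        simp only [sub_mul]
    _ = ∫ v in Ici (0 : ℝ), (v * h v * f v - (1 - F v) * h v) := by
        rw [integral_sub hvh hH, integral_sub hvh htail,
          integral_primitive_mul_density_eq hf0 hprob hF hh hh0 hH]
    _ = ∫ v in Ici (0 : ℝ), (v * f v - (1 - F v)) * h v := by
        congr with v
        ring

end Revenue

section VirtualValue

variable {f F h q : ℝ → ℝ}

/-- Myerson's virtual value `φ(v) = v - (1 - F v) / f v` of the law with cumulative distribution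
function `F` and density `f`; the expected payment for an allocation rule `h` is the expectation of
`φ(V) * h(V)`. Where `f v = 0` the division makes it equal to `v`; below it is only integrated
against `f`, so this value does not matter. -/
noncomputable def virtualValue (F f : ℝ → ℝ) (v : ℝ) : ℝ :=
  v - (1 - F v) / f v

lemma max_virtualValue_mul_density {v : ℝ} (hf : 0 ≤ f v) (hF : F v ≤ 1) :
    max (virtualValue F f v) 0 * f v = max (v * f v - (1 - F v)) 0 := by
  rcases hf.eq_or_lt with hf | hf
  · simp [← hf, hF]
  · rw [max_mul_of_nonneg _ _ hf.le, zero_mul, virtualValue, sub_mul, div_mul_cancel₀ _ hf.ne']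

lemma integrableOn_virtualSurplus (hf0 : ∀ v, 0 ≤ v → 0 ≤ f v)
    (hprob : ∫ v in Ici (0 : ℝ), f v = 1) (hF : ∀ v, F v = ∫ t in (0 : ℝ)..v, f t)
    (hmean : IntegrableOn (fun v => v * f v) (Ici 0)) {c : ℝ}
    (hq : AEStronglyMeasurable q (volume.restrict (Ici 0))) (hqc : ∀ v, 0 ≤ v → ‖q v‖ ≤ c) :
    IntegrableOn (fun v => max (virtualValue F f v) 0 * q v * f v) (Ici 0) := by
  have hF1 (v : ℝ) (hv : 0 ≤ v) : F v ≤ 1 := cdf_le_one hf0 hprob hF hv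
  have hpos : IntegrableOn (fun v => max (v * f v - (1 - F v)) 0) (Ici 0) := by
    have hFm := aemeasurable_cdf hf0 hprob hF
    refine hmean.mono' ((hmean.aemeasurable.sub (hFm.const_sub 1)).max
      aemeasurable_const).aestronglyMeasurable
      (ae_restrict_of_forall_mem measurableSet_Ici fun v (hv : 0 ≤ v) => ?_)
    rw [Real.norm_of_nonneg (le_max_right _ _)]
    exact max_le (sub_le_self _ (sub_nonneg.2 (hF1 v hv))) (mul_nonneg hv (hf0 v hv))
  refine IntegrableOn.congr_fun
    (hpos.mul_bdd hq (ae_restrict_of_forall_mem measurableSet_Ici hqc)) (fun v hv => ?_)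
    measurableSet_Ici
  rw [mul_right_comm, max_virtualValue_mul_density (hf0 v hv) (hF1 v hv)]

lemma sub_tail_mul_le_virtualSurplus {v x y : ℝ} (hf : 0 ≤ f v) (hF : F v ≤ 1) (hx : 0 ≤ x)
    (hxy : x ≤ y) :
    (v * f v - (1 - F v)) * x ≤ max (virtualValue F f v) 0 * y * f v := by
  rw [mul_right_comm, max_virtualValue_mul_density hf hF]
  exact mul_le_mul (le_max_left _ _) hxy hx (le_max_right _ _)

lemma integral_payment_le_virtualSurplus (hf0 : ∀ v, 0 ≤ v → 0 ≤ f v)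
    (hprob : ∫ v in Ici (0 : ℝ), f v = 1) (hF : ∀ v, F v = ∫ t in (0 : ℝ)..v, f t)
    (hh : LocallyIntegrableOn h (Ici 0)) (hh0 : ∀ v, 0 ≤ v → 0 ≤ h v)
    (hvh : IntegrableOn (fun v => v * h v * f v) (Ici 0))
    (hH : IntegrableOn (fun v => (∫ t in (0 : ℝ)..v, h t) * f v) (Ici 0))
    (hhq : ∀ v, 0 ≤ v → h v ≤ q v)
    (hq : IntegrableOn (fun v => max (virtualValue F f v) 0 * q v * f v) (Ici 0)) :
    ∫ v in Ici (0 : ℝ), (v * h v - ∫ t in (0 : ℝ)..v, h t) * f v ≤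
      ∫ v in Ici (0 : ℝ), max (virtualValue F f v) 0 * q v * f v := by
  rw [integral_payment_mul_density_eq hf0 hprob hF hh hh0 hvh hH]
  exact setIntegral_mono_on (integrableOn_sub_tail_mul hf0 hprob hF hh hh0 hvh hH) hq
    measurableSet_Ici fun v hv => sub_tail_mul_le_virtualSurplus (hf0 v hv)
      (cdf_le_one hf0 hprob hF hv) (hh0 v hv) (hhq v hv)

end VirtualValue

section Capacity

variable {f F g q : ℝ → ℝ} {C : ℝ}

lemma integral_primitive_min_mul_le_payment (hC : 0 ≤ C) (hf0 : ∀ v, 0 ≤ v → 0 ≤ f v)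
    (hg0 : 0 ≤ g 0) (hgmono : MonotoneOn g (Icc 0 C))
    (hgdiv : MonotoneOn (fun z => g z / z) (Ioc 0 C))
    (hpay : IntegrableOn
      (fun v => (v * g (min v C) - ∫ z in (0 : ℝ)..v, g (min z C)) * f v) (Ici 0)) :
    ∫ v in Ici (0 : ℝ), (∫ z in (0 : ℝ)..(min v C), g z) * f v ≤
      ∫ v in Ici (0 : ℝ), (v * g (min v C) - ∫ z in (0 : ℝ)..v, g (min z C)) * f v := by
  refine integral_mono_of_nonneg
    (ae_restrict_of_forall_mem measurableSet_Ici fun v hv => mul_nonneg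
      (intervalIntegral.integral_nonneg (le_min hv hC) fun z hz => ?_) (hf0 v hv)) hpay
    (ae_restrict_of_forall_mem measurableSet_Ici fun v hv =>
      mul_le_mul_of_nonneg_right (integral_le_payment hC hv hgmono hgdiv) (hf0 v hv))
  exact hg0.trans (hgmono (left_mem_Icc.2 hC) ⟨hz.1, hz.2.trans (min_le_right v C)⟩ hz.1)

theorem below_capacity_part_bounded_by_virtual_surplus_general (hC : 0 ≤ C)
    (hf0 : ∀ v, 0 ≤ v → 0 ≤ f v) (hprob : ∫ v in Ici (0 : ℝ), f v = 1)
    (hF : ∀ v, F v = ∫ t in (0 : ℝ)..v, f t)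
    (hmean : IntegrableOn (fun v => v * f v) (Ici 0))
    (hg0 : 0 ≤ g 0) (hgmono : MonotoneOn g (Ici 0))
    (hgdiv : MonotoneOn (fun z => g z / z) (Ioc 0 C)) (hgq : ∀ v, 0 ≤ v → g v ≤ q v)
    (hq : IntegrableOn (fun v => max (virtualValue F f v) 0 * q v * f v) (Ici 0)) :
    ∫ v in Ici (0 : ℝ), (∫ z in (0 : ℝ)..(min v C), g z) * f v ≤
      ∫ v in Ici (0 : ℝ), max (virtualValue F f v) 0 * q v * f v := by
  let h : ℝ → ℝ := fun v => g (min v C)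
  have hh : MonotoneOn h (Ici 0) := fun v hv w hw hvw =>
    hgmono (le_min hv hC) (le_min hw hC) (min_le_min_right C hvw)
  have hh0 (v : ℝ) (hv : 0 ≤ v) : 0 ≤ h v :=
    hg0.trans (hgmono self_mem_Ici (le_min hv hC) (le_min hv hC))
  have hhC (v : ℝ) (hv : 0 ≤ v) : ‖h v‖ ≤ g C :=
    (Real.norm_of_nonneg (hh0 v hv)).trans_le (hgmono (le_min hv hC) hC (min_le_right v C))
  have hhq (v : ℝ) (hv : 0 ≤ v) : h v ≤ q v :=
    (hgmono (le_min hv hC) hv (min_le_left v C)).trans (hgq v hv)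
  have hloc := locallyIntegrableOn_of_monotoneOn isClosed_Ici.isLocallyClosed hh
  have hvh := integrableOn_mul_mul_density hmean hloc.aestronglyMeasurable hhC
  have hH := integrableOn_primitive_mul_density
    (integrable_of_integral_eq_one hprob).aemeasurable hf0 hh hh0 hvh
  have hpay : IntegrableOn (fun v => (v * h v - ∫ z in (0 : ℝ)..v, h z) * f v) (Ici 0) :=
    (hvh.sub hH).congr_fun (fun v _ => (sub_mul (v * h v) _ (f v)).symm) measurableSet_Ici
  exact (integral_primitive_min_mul_le_payment hC hf0 hg0 (hgmono.mono Icc_subset_Ici_self)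
    hgdiv hpay).trans (integral_payment_le_virtualSurplus hf0 hprob hF hloc hh0 hvh hH hhq hq)

end Capacity

/-- Let `V` have CDF `F`, density `f > 0` on `[0,∞)`, and finite mean,
and `C > 0`. If `g : [0,∞) → [0,1]` is nondecreasing with `g(0) = 0` and convex on
`[0, C]`, and `q_c : [0,∞) → [0,1]` is measurable with `g ≤ q_c`, then
`E[∫_0^{min(V,C)} g(z) dz] ≤ E[φ⁺(V)·q_c(V)]`, where `φ(v) = v − (1 − F(v))/f(v)`. -/
theorem below_capacity_part_bounded_by_virtual_surplus
    (C : ℝ) (hC : 0 < C)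
    (f F : ℝ → ℝ) (hfm : Measurable f)
    (hfpos : ∀ v, 0 ≤ v → 0 < f v)
    (hprob : ∫ v in Ici (0 : ℝ), f v = 1)
    (hF : ∀ v, F v = ∫ t in (0 : ℝ)..v, f t)
    (hmean : IntegrableOn (fun v => v * f v) (Ici 0))
    (g : ℝ → ℝ) (hg01 : ∀ v, 0 ≤ v → g v ∈ Icc (0 : ℝ) 1)
    (hgmono : MonotoneOn g (Ici 0)) (hg0 : g 0 = 0)
    (hgconv : ConvexOn ℝ (Icc 0 C) g)
    (qc : ℝ → ℝ) (hqcm : Measurable qc)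
    (hqc01 : ∀ v, 0 ≤ v → qc v ∈ Icc (0 : ℝ) 1)
    (hgqc : ∀ v, 0 ≤ v → g v ≤ qc v) :
    (∫ v in Ici (0 : ℝ), (∫ z in (0 : ℝ)..(min v C), g z) * f v) ≤
      ∫ v in Ici (0 : ℝ), max (v - (1 - F v) / f v) 0 * qc v * f v :=
  below_capacity_part_bounded_by_virtual_surplus_general hC.le (fun v hv => (hfpos v hv).le) hprob
    hF hmean hg0.ge hgmono (monotoneOn_div_of_convexOn hgconv hg0) hgqc
    (integrableOn_virtualSurplus (fun v hv => (hfpos v hv).le) hprob hF hmean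
      hqcm.aestronglyMeasurable fun v hv => abs_le.2 ⟨by linarith [(hqc01 v hv).1], (hqc01 v hv).2⟩)
end

section
/- Fix a capacity C > 0 and let (x, p) be a one-priced mechanism (x : [0,∞) → [0,1], p : [0,∞) → ℝ, p(0) = 0, 0 ≤ p(v) ≤ v·x(v)). If (x, p) is BIC, i.e. min( v·x(v) − p(v), C·x(v) ) ≥ min( v·x(v') − p(v'), C·x(v') ) for all v, v' ≥ 0, then x is monotone nondecreasing. -/
open Set

/-!
Capacitated utility has strict single crossing: if a type weakly prefers the larger of two
allocations, then every higher type strictly prefers it. Indeed, raising the value from `a` to `b`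
raises the utility of an outcome with allocation `q` by at most `(b - a) * q`, and by exactly that
much as long as the capacity does not bind; and if the capacity binds at the larger allocation, the
utility there exceeds whatever the smaller allocation can yield. So if the allocation dropped
between two types, incentive compatibility of the lower type would contradict that of the higher.
-/

section CapacitatedUtility

variable {R : Type*} [CommRing R] [LinearOrder R]

/-- The expected utility, for an agent with value `v` and capacity `C`, of being served with
probability `q` at expected payment `t`. As the agent pays `t / q` only when served, this is
`q * min (v - t / q) C` for `q > 0`, written without the division. -/
def capacitatedUtility (C v q t : R) : R :=
  min (v * q - t) (C * q)

/-- Bayesian incentive compatibility of the allocation rule `x` and expected payment rule `p` for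
agents of capacity `C` whose values, and reports, range over `S`: reporting truthfully is optimal.
The rules are total functions, of which only the values on `S` matter. -/
def IsBIC (C : R) (S : Set R) (x p : R → R) : Prop :=
  ∀ v ∈ S, ∀ v' ∈ S,
    capacitatedUtility C v (x v') (p v') ≤ capacitatedUtility C v (x v) (p v)

variable [IsStrictOrderedRing R] {C a b q q' t t' : R}

theorem capacitatedUtility_le_add_sub_mul (hab : a ≤ b) (hq : 0 ≤ q) :
    capacitatedUtility C b q t ≤ capacitatedUtility C a q t + (b - a) * q := by
  have hgain : 0 ≤ (b - a) * q := mul_nonneg (sub_nonneg.mpr hab) hq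
  calc min (b * q - t) (C * q)
      ≤ min (a * q - t + (b - a) * q) (C * q + (b - a) * q) :=
        min_le_min (by linarith) (le_add_of_nonneg_right hgain)
    _ = min (a * q - t) (C * q) + (b - a) * q := min_add_add_right ..

theorem capacitatedUtility_strict_single_crossing (hC : 0 < C) (hab : a < b) (hq : 0 ≤ q)
    (hqq' : q < q') (h : capacitatedUtility C a q t ≤ capacitatedUtility C a q' t') :
    capacitatedUtility C b q t < capacitatedUtility C b q' t' := by
  have below_uncapped : capacitatedUtility C b q t < b * q' - t' :=
    calc capacitatedUtility C b q t
        ≤ capacitatedUtility C a q t + (b - a) * q := capacitatedUtility_le_add_sub_mul hab.le hq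
      _ < capacitatedUtility C a q t + (b - a) * q' := by gcongr
      _ ≤ (a * q' - t') + (b - a) * q' := by
        gcongr
        exact h.trans (min_le_left _ _)
      _ = b * q' - t' := by ring
  have below_cap : capacitatedUtility C b q t < C * q' :=
    (min_le_right _ _).trans_lt (mul_lt_mul_of_pos_left hqq' hC)
  exact lt_min below_uncapped below_cap

theorem one_priced_BIC_implies_monotone_general {S : Set R} {x p : R → R} (hC : 0 < C)
    (hx : ∀ v ∈ S, 0 ≤ x v) (hBIC : IsBIC C S x p) : MonotoneOn x S := by
  intro a ha b hb hab
  by_contra! hdrop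
  have hlt : a < b := hab.lt_of_ne (by rintro rfl; exact hdrop.false)
  have hdeviate : capacitatedUtility C b (x b) (p b) < capacitatedUtility C b (x a) (p a) :=
    capacitatedUtility_strict_single_crossing hC hlt (hx b hb) hdrop (hBIC a ha b hb)
  exact (hBIC b hb a ha).not_gt hdeviate

end CapacitatedUtility

/-- If `(x, p)` is a one-priced mechanism (with `p(0) = 0` and
`0 ≤ p(v) ≤ v·x(v)`) that is BIC for capacitated utility
`U(v,v') = min(v·x(v') − p(v'), C·x(v'))`, then `x` is monotone nondecreasing. -/
theorem one_priced_BIC_implies_monotone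
    (C : ℝ) (hC : 0 < C)
    (x p : ℝ → ℝ)
    (hx01 : ∀ v, 0 ≤ v → x v ∈ Icc (0 : ℝ) 1)
    (hp0 : p 0 = 0)
    (hpbd : ∀ v, 0 ≤ v → 0 ≤ p v ∧ p v ≤ v * x v)
    (hBIC : ∀ v, 0 ≤ v → ∀ v', 0 ≤ v' →
        min (v * x v - p v) (C * x v) ≥ min (v * x v' - p v') (C * x v')) :
    MonotoneOn x (Ici 0) :=
  one_priced_BIC_implies_monotone_general hC (fun v hv ↦ (hx01 v hv).1) hBIC
end
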